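/- Let G be a linearly reductive affine algebraic group over an algebraically closed field k and let H be a finitely generated cosemisimple Hopf algebra that is a quantum function algebra on G, i.e. (R_+(H), d_H) ≅ (R_+(G), d_G). Then GKdim H = dim G, the dimension of G as an algebraic variety. -/

import Mathlib

/-!
Background definitions: comodules over a Hopf algebra, simple comodules, direct
summands, supports, subcoalgebras, cosemisimplicity, Gelfand-Kirillov dimension,
and (measured) Grothendieck semirings of cosemisimple Hopf algebras.
-/

open TensorProduct

/-- The data of a coaction of a Hopf algebra `H` on a `k`-vector space `X`:
a linear map `ρ : X → X ⊗ H`.  The comodule axioms are recorded separately in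
`Comod.IsComodule`. -/
structure Comod (k : Type) [Field k] (H : Type) [Ring H] [HopfAlgebra k H] : Type 1 where
  X : Type
  [addCommGroup : AddCommGroup X]
  [module : Module k X]
  ρ : X →ₗ[k] X ⊗[k] H

attribute [instance] Comod.addCommGroup Comod.module

namespace Comod

variable {k : Type} [Field k] {H : Type} [Ring H] [HopfAlgebra k H]

/-- The trivial `H`-comodule `𝟏`, i.e. `k` with coaction `x ↦ x ⊗ 1`. -/
noncomputable def unit (k : Type) [Field k] (H : Type) [Ring H] [HopfAlgebra k H] :
    Comod k H where
  X := k
  ρ := (TensorProduct.mk k k H).flip 1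

/-- The regular comodule: `H` coacting on itself by comultiplication. -/
noncomputable def regular (k : Type) [Field k] (H : Type) [Ring H] [HopfAlgebra k H] :
    Comod k H where
  X := H
  ρ := Coalgebra.comul

/-- Tensor product of comodules: the coaction on `M ⊗ N` is
`(id ⊗ id ⊗ μ_H) ∘ (id ⊗ τ ⊗ id) ∘ (ρ_M ⊗ ρ_N)`. -/
noncomputable def tensor (M N : Comod k H) : Comod k H where
  X := M.X ⊗[k] N.X
  ρ := (LinearMap.mul' k H).lTensor (M.X ⊗[k] N.X)
        ∘ₗ (TensorProduct.tensorTensorTensorComm k M.X H N.X H).toLinearMap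
        ∘ₗ TensorProduct.map M.ρ N.ρ

/-- Binary direct sum of comodules. -/
noncomputable def dsum (M N : Comod k H) : Comod k H where
  X := M.X × N.X
  ρ := (LinearMap.inl k M.X N.X).rTensor H ∘ₗ M.ρ ∘ₗ LinearMap.fst k M.X N.X
     + (LinearMap.inr k M.X N.X).rTensor H ∘ₗ N.ρ ∘ₗ LinearMap.snd k M.X N.X

/-- Finite direct sum of a family of comodules. -/
noncomputable def pi {ι : Type} [Fintype ι] (S : ι → Comod k H) : Comod k H where
  X := ∀ i, (S i).X
  ρ := letI := Classical.decEq ι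
    ∑ i : ι, (LinearMap.single k (fun j => (S j).X) i).rTensor H ∘ₗ (S i).ρ
        ∘ₗ LinearMap.proj i

/-- `n`-th tensor power of a comodule (`M^{⊗0} = 𝟏`, `M^{⊗1} = M`). -/
noncomputable def tpow (M : Comod k H) : ℕ → Comod k H
  | 0 => unit k H
  | 1 => M
  | n + 2 => (M.tpow (n + 1)).tensor M

/-- A linear map is a map of comodules if it intertwines the coactions. -/
def IsHom (M N : Comod k H) (f : M.X →ₗ[k] N.X) : Prop :=
  N.ρ ∘ₗ f = f.rTensor H ∘ₗ M.ρ

/-- Isomorphism of comodules. -/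
def Iso (M N : Comod k H) : Prop :=
  ∃ e : M.X ≃ₗ[k] N.X, IsHom M N e.toLinearMap

/-- The comodule axioms (coassociativity and counitality) for a coaction. -/
def IsComodule (M : Comod k H) : Prop :=
  (M.ρ.rTensor H ∘ₗ M.ρ =
      (TensorProduct.assoc k M.X H H).symm.toLinearMap
        ∘ₗ (Coalgebra.comul (R := k) (A := H)).lTensor M.X ∘ₗ M.ρ) ∧
  (TensorProduct.rid k M.X).toLinearMap
      ∘ₗ (Coalgebra.counit (R := k) (A := H)).lTensor M.X ∘ₗ M.ρ = LinearMap.id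

/-- A subspace `N ⊆ M` is a subcomodule if the coaction restricts to `N ⊗ H`. -/
def IsSubcomodule (M : Comod k H) (N : Submodule k M.X) : Prop :=
  ∀ x ∈ N, M.ρ x ∈ LinearMap.range (N.subtype.rTensor H)

/-- Simple (hence finite-dimensional) comodules. -/
def IsSimple (M : Comod k H) : Prop :=
  M.IsComodule ∧ Nontrivial M.X ∧ FiniteDimensional k M.X ∧
    ∀ N : Submodule k M.X, M.IsSubcomodule N → N = ⊥ ∨ N = ⊤

/-- `S` is a direct summand of `M` (as comodules): the inclusion splits. -/
def DirectSummand (S M : Comod k H) : Prop :=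
  ∃ (i : S.X →ₗ[k] M.X) (p : M.X →ₗ[k] S.X),
    IsHom S M i ∧ IsHom M S p ∧ p ∘ₗ i = LinearMap.id

/-- `C` is the support of the comodule `M`: the (unique) minimal subspace
`C ⊆ H` with `ρ(M) ⊆ M ⊗ C`. -/
def IsSupport (M : Comod k H) (C : Submodule k H) : Prop :=
  (∀ x : M.X, M.ρ x ∈ LinearMap.range (C.subtype.lTensor M.X)) ∧
    ∀ C' : Submodule k H,
      (∀ x : M.X, M.ρ x ∈ LinearMap.range (C'.subtype.lTensor M.X)) → C ≤ C'

end Comod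

/-- A subspace `C ⊆ H` is a subcoalgebra if `Δ(C) ⊆ C ⊗ C`. -/
def IsSubcoalgebra (k : Type) [Field k] (H : Type) [Ring H] [HopfAlgebra k H]
    (C : Submodule k H) : Prop :=
  ∀ x ∈ C, Coalgebra.comul (R := k) x ∈
    LinearMap.range (TensorProduct.map C.subtype C.subtype)

/-- A simple subcoalgebra: a nonzero subcoalgebra with no proper nonzero
subcoalgebras. -/
def IsSimpleSubcoalgebra (k : Type) [Field k] (H : Type) [Ring H] [HopfAlgebra k H]
    (C : Submodule k H) : Prop :=
  IsSubcoalgebra k H C ∧ C ≠ ⊥ ∧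
    ∀ D : Submodule k H, D ≤ C → IsSubcoalgebra k H D → D = ⊥ ∨ D = C

/-- A Hopf algebra is cosemisimple if every subcomodule of every comodule is a
direct summand. -/
def IsCosemisimple (k : Type) [Field k] (H : Type) [Ring H] [HopfAlgebra k H] : Prop :=
  ∀ M : Comod k H, M.IsComodule →
    ∀ N : Submodule k M.X, M.IsSubcomodule N →
      ∃ N' : Submodule k M.X, M.IsSubcomodule N' ∧ IsCompl N N'

open scoped ENNReal in
/-- The Gelfand-Kirillov dimension of a `k`-algebra `A`:
`sup_V limsup_n log(dim V^n)/log n` over finite-dimensional subspaces `V ⊆ A`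
(for a finitely generated algebra this agrees with the value computed from any
finite-dimensional generating subspace containing `1`). -/
noncomputable def GKdim (k : Type) (A : Type) [Field k] [Ring A] [Algebra k A] : ℝ≥0∞ :=
  ⨆ (V : Submodule k A) (_ : FiniteDimensional k V),
    Filter.limsup
      (fun n : ℕ => ENNReal.ofReal
        (Real.log (Module.finrank k ↥(V ^ n)) / Real.log n)) Filter.atTop

/-- The (measured) Grothendieck semiring of a cosemisimple Hopf algebra `H`:
a commutative semiring `R` together with a class map `cls` on finite-dimensional
`H`-comodules which is constant on isomorphism classes, additive on direct sums,
multiplicative on tensor products, sends `𝟏` to `1`, and induces a bijection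
between iso-classes of finite-dimensional comodules and elements of `R`.
The dimension function `d_H` on `R_+(H)` is recovered as `cls M ↦ dim_k M`. -/
structure GrSemiring (k : Type) [Field k] (H : Type) [Ring H] [HopfAlgebra k H] :
    Type 1 where
  R : Type
  [commSemiring : CommSemiring R]
  cls : Comod k H → R
  cls_one : cls (Comod.unit k H) = 1
  cls_iso : ∀ M N : Comod k H, M.IsComodule → N.IsComodule →
    FiniteDimensional k M.X → FiniteDimensional k N.X → Comod.Iso M N → cls M = cls N
  cls_dsum : ∀ M N : Comod k H, M.IsComodule → N.IsComodule →
    FiniteDimensional k M.X → FiniteDimensional k N.X →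
      cls (M.dsum N) = cls M + cls N
  cls_tensor : ∀ M N : Comod k H, M.IsComodule → N.IsComodule →
    FiniteDimensional k M.X → FiniteDimensional k N.X →
      cls (M.tensor N) = cls M * cls N
  cls_surj : ∀ r : R, ∃ M : Comod k H, M.IsComodule ∧ FiniteDimensional k M.X ∧ cls M = r
  cls_inj : ∀ M N : Comod k H, M.IsComodule → N.IsComodule →
    FiniteDimensional k M.X → FiniteDimensional k N.X → cls M = cls N → Comod.Iso M N

attribute [instance] GrSemiring.commSemiring

/-!
The matrix coefficients of a finite-dimensional comodule `M` span a finite-dimensional subspace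
`C(M)` of `H`; every finite-dimensional subspace of `H` lies in some `C(M)`, so `GKdim H` is the
supremum over `M` of the growth exponent of `n ↦ dim C(M)ⁿ`. Since `C(M ⊕ N) = C(M) + C(N)` and
`C(M ⊗ N) = C(M) C(N)`, we have `C(M)ⁿ = C(M^{⊗n})`. By cosemisimplicity and the density theorem,
`dim C(M)` is the sum of `(dim S)²` over the isomorphism classes of simple comodules `S` occurring
in `M`, a number read off the class of `M` in the measured Grothendieck semiring. Hence `GKdim`
depends only on that semiring, and for the commutative algebra `O(G)` it is the Krull dimension by
Noether normalization.
-/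

section GrowthExponent

open Filter Topology Asymptotics
open scoped ENNReal

/-- The exponent of polynomial growth `limsup log (u n) / log n` of a sequence, truncated below
at `0` as in `GKdim`. -/
noncomputable def growthExponent (u : ℕ → ℝ) : ℝ≥0∞ :=
  limsup (fun n : ℕ => ENNReal.ofReal (Real.log (u n) / Real.log n)) atTop

theorem tendsto_ofReal_const_div_log (c : ℝ) :
    Tendsto (fun n : ℕ => ENNReal.ofReal (c / Real.log n)) atTop (𝓝 0) := by
  have h : Tendsto (fun n : ℕ => c / Real.log n) atTop (𝓝 0) :=
    (Real.tendsto_log_atTop.comp tendsto_natCast_atTop_atTop).const_div_atTop c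
  simpa using ENNReal.tendsto_ofReal h

theorem log_le_log_add_log_of_norm_le {x y C : ℝ} (hx : x ≠ 0) (hC : 0 < C)
    (h : ‖x‖ ≤ C * ‖y‖) : Real.log x ≤ Real.log C + Real.log y := by
  have hy : ‖y‖ ≠ 0 := fun hy => hx (by simpa [hy] using h)
  rw [← Real.log_abs x, ← Real.log_abs y, ← Real.norm_eq_abs, ← Real.norm_eq_abs,
    ← Real.log_mul hC.ne' hy]
  exact Real.log_le_log (norm_pos_iff.2 hx) h

theorem growthExponent_le_of_isBigO {u v : ℕ → ℝ} (h : u =O[atTop] v) :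
    growthExponent u ≤ growthExponent v := by
  obtain ⟨C, hC, hbound⟩ := h.exists_pos
  have hpointwise : ∀ᶠ n : ℕ in atTop, ENNReal.ofReal (Real.log (u n) / Real.log n) ≤
      ENNReal.ofReal (Real.log C / Real.log n) + ENNReal.ofReal (Real.log (v n) / Real.log n) := by
    filter_upwards [hbound.bound] with n hn
    rcases eq_or_ne (u n) 0 with hu | hu
    · simp [hu]
    · refine le_trans (ENNReal.ofReal_le_ofReal ?_) ENNReal.ofReal_add_le
      rw [← add_div]
      have : 0 ≤ Real.log n := Real.log_natCast_nonneg n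
      gcongr
      exact log_le_log_add_log_of_norm_le hu hC hn
  refine (limsup_le_limsup hpointwise).trans_eq ?_
  exact ENNReal.limsup_add_of_left_tendsto_zero (tendsto_ofReal_const_div_log _) _

theorem growthExponent_natCast_pow (s : ℕ) : growthExponent (fun n => (n : ℝ) ^ s) = s := by
  refine Tendsto.limsup_eq (tendsto_const_nhds.congr' ?_)
  filter_upwards [eventually_ge_atTop 2] with n hn
  have hlog : Real.log n ≠ 0 := (Real.log_pos (by exact_mod_cast hn)).ne'
  rw [Real.log_pow, mul_div_cancel_right₀ _ hlog, ENNReal.ofReal_natCast]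

end GrowthExponent

section SubmoduleProducts

variable {k A : Type*} [Field k] [Ring A] [Algebra k A]

instance finiteDimensional_mul (M N : Submodule k A) [FiniteDimensional k M]
    [FiniteDimensional k N] : FiniteDimensional k ↥(M * N) :=
  Module.Finite.of_fg <| .mul (Module.Finite.iff_fg.1 ‹_›) (Module.Finite.iff_fg.1 ‹_›)

instance finiteDimensional_pow (M : Submodule k A) [FiniteDimensional k M] (n : ℕ) :
    FiniteDimensional k ↥(M ^ n) :=
  Module.Finite.of_fg <| .pow (Module.Finite.iff_fg.1 ‹_›) n

theorem finrank_mul_le (M N : Submodule k A) [FiniteDimensional k M] [FiniteDimensional k N] :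
    Module.finrank k ↥(M * N) ≤ Module.finrank k M * Module.finrank k N := by
  rw [← Submodule.mulMap_range, ← Module.finrank_tensorProduct]
  exact LinearMap.finrank_range_le _

end SubmoduleProducts

section GelfandKirillovDimension

variable {k A B : Type} [Field k] [Ring A] [Algebra k A] [Ring B] [Algebra k B]

/-- The exponent of polynomial growth of `n ↦ dim Vⁿ`; `GKdim k A` is its supremum over the
finite-dimensional subspaces `V` of `A`. -/
noncomputable def powerGrowth (V : Submodule k A) : ENNReal :=
  growthExponent fun n => Module.finrank k ↥(V ^ n)

theorem powerGrowth_le_GKdim (V : Submodule k A) [FiniteDimensional k V] :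
    powerGrowth V ≤ GKdim k A :=
  le_iSup₂_of_le V ‹_› le_rfl

theorem GKdim_le {c : ENNReal}
    (h : ∀ V : Submodule k A, FiniteDimensional k V → powerGrowth V ≤ c) : GKdim k A ≤ c :=
  iSup₂_le h

theorem powerGrowth_le_of_finrank_le {V : Submodule k A} {W : Submodule k B} (c : ℕ)
    (h : ∀ n, Module.finrank k ↥(V ^ n) ≤ c * Module.finrank k ↥(W ^ n)) :
    powerGrowth V ≤ powerGrowth W :=
  growthExponent_le_of_isBigO <| .of_bound c <| .of_forall fun n => by
    simpa using mod_cast h n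

theorem powerGrowth_mono {V W : Submodule k A} [FiniteDimensional k W] (h : V ≤ W) :
    powerGrowth V ≤ powerGrowth W :=
  powerGrowth_le_of_finrank_le 1 fun n => by
    simpa using Submodule.finrank_mono (pow_le_pow_left' h n)

theorem powerGrowth_map {f : A →ₐ[k] B} (hf : Function.Injective f) (V : Submodule k A) :
    powerGrowth (V.map f.toLinearMap) = powerGrowth V := by
  unfold powerGrowth
  congr! 3 with n
  rw [← Submodule.map_pow]
  exact (Submodule.equivMapOfInjective f.toLinearMap hf _).finrank_eq.symm

theorem GKdim_le_of_injective (f : A →ₐ[k] B) (hf : Function.Injective f) :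
    GKdim k A ≤ GKdim k B :=
  GKdim_le fun V _ => (powerGrowth_map hf V).symm.trans_le (powerGrowth_le_GKdim _)

end GelfandKirillovDimension

section FiniteExtension

open IsScalarTower (toAlgHom)

variable {k B A : Type*} [Field k] [CommRing B] [Algebra k B] [Ring A] [Algebra k A] [Algebra B A]
  [IsScalarTower k B A]

theorem map_toAlgHom_mul_comm (U : Submodule k B) (W : Submodule k A) :
    W * U.map (toAlgHom k B A).toLinearMap = U.map (toAlgHom k B A).toLinearMap * W := by
  refine Submodule.mul_comm_of_commute fun w _ u hu => ?_
  obtain ⟨b, -, rfl⟩ := hu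
  exact (Algebra.commutes b w).symm

theorem exists_le_map_toAlgHom_mul_span {t : Finset A} (ht : Submodule.span B (t : Set A) = ⊤)
    (V : Submodule k A) [FiniteDimensional k V] :
    ∃ U : Submodule k B, FiniteDimensional k U ∧
      V ≤ U.map (toAlgHom k B A).toLinearMap * Submodule.span k t := by
  classical
  have hcoeff : ∀ x : A, ∃ c : A → B, ∑ a ∈ t, c a • a = x := fun x =>
    (Submodule.mem_span_finset.1 (ht ▸ Submodule.mem_top)).imp fun _ => And.right
  choose c hc using hcoeff
  obtain ⟨s, rfl⟩ : V.FG := Module.Finite.iff_fg.1 ‹_›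
  refine ⟨Submodule.span k ((s ×ˢ t).image fun p => c p.1 p.2), inferInstance, ?_⟩
  refine Submodule.span_le.2 fun x hx => ?_
  rw [← hc x]
  refine Submodule.sum_mem _ fun a ha => ?_
  rw [Algebra.smul_def]
  refine Submodule.mul_mem_mul (Submodule.mem_map_of_mem ?_) (Submodule.subset_span ha)
  exact Submodule.subset_span (Finset.mem_image_of_mem _ (Finset.mk_mem_product hx ha))

theorem pow_le_map_toAlgHom_pow_mul {V W : Submodule k A} {U : Submodule k B}
    (hV : V ≤ U.map (toAlgHom k B A).toLinearMap * W)
    (hW : W * W ≤ U.map (toAlgHom k B A).toLinearMap * W)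
    (hone : 1 ≤ U.map (toAlgHom k B A).toLinearMap * W) (n : ℕ) :
    V ^ n ≤ ((U ^ 2) ^ n).map (toAlgHom k B A).toLinearMap *
      (U.map (toAlgHom k B A).toLinearMap * W) := by
  rw [Submodule.map_pow, Submodule.map_pow]
  have hcomm := map_toAlgHom_mul_comm U W
  generalize U.map (toAlgHom k B A).toLinearMap = P at *
  induction n with
  | zero => simpa using hone
  | succ n ih =>
    calc V ^ (n + 1) = V ^ n * V := pow_succ _ _
      _ ≤ (P ^ 2) ^ n * (P * W) * (P * W) := mul_le_mul' ih hV
      _ = (P ^ 2) ^ n * P * (W * P) * W := by simp only [mul_assoc]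
      _ = (P ^ 2) ^ n * P ^ 2 * (W * W) := by simp only [hcomm, pow_two, mul_assoc]
      _ ≤ (P ^ 2) ^ n * P ^ 2 * (P * W) := mul_le_mul' le_rfl hW
      _ = (P ^ 2) ^ (n + 1) * (P * W) := by rw [pow_succ (P ^ 2) n]

end FiniteExtension

theorem GKdim_le_of_finite {k B A : Type} [Field k] [CommRing B] [Algebra k B] [Ring A]
    [Algebra k A] [Algebra B A] [IsScalarTower k B A] [Module.Finite B A] :
    GKdim k A ≤ GKdim k B := by
  refine GKdim_le fun V _ => ?_
  obtain ⟨t, ht⟩ := Module.Finite.fg_top (R := B) (M := A)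
  set W := Submodule.span k (t : Set A)
  have : FiniteDimensional k ↥(1 : Submodule k A) :=
    Module.Finite.of_fg <| Submodule.one_eq_span (R := k) (A := A) ▸ Submodule.fg_span_singleton 1
  obtain ⟨U, _, hU⟩ := exists_le_map_toAlgHom_mul_span (k := k) ht (V ⊔ W * W ⊔ 1)
  obtain ⟨⟨hV, hW⟩, hone⟩ := (sup_le_iff.trans (and_congr_left' sup_le_iff)).1 hU
  set P := U.map (IsScalarTower.toAlgHom k B A).toLinearMap
  refine (powerGrowth_le_of_finrank_le (W := U ^ 2) (Module.finrank k ↥(P * W)) fun n => ?_).trans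
    (powerGrowth_le_GKdim _)
  calc Module.finrank k ↥(V ^ n)
      ≤ Module.finrank k ↥(((U ^ 2) ^ n).map (IsScalarTower.toAlgHom k B A).toLinearMap *
          (P * W)) := Submodule.finrank_mono (pow_le_map_toAlgHom_pow_mul hV hW hone n)
    _ ≤ _ := finrank_mul_le _ _
    _ ≤ Module.finrank k ↥((U ^ 2) ^ n) * Module.finrank k ↥(P * W) :=
        Nat.mul_le_mul_right _ (Submodule.finrank_map_le _ _)
    _ = _ := mul_comm _ _

section MvPolynomial

open MvPolynomial Pointwise

variable {σ : Type*}

theorem finrank_restrictDegree [Fintype σ] (R : Type*) [CommRing R] [StrongRankCondition R]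
    (m : ℕ) : Module.finrank R (restrictDegree σ R m) = (m + 1) ^ Fintype.card σ := by
  classical
  have e : {n : σ →₀ ℕ | ∀ i, n i ≤ m} ≃ (σ → Fin (m + 1)) :=
    { toFun := fun n i => ⟨n.1 i, Nat.lt_succ_of_le (n.2 i)⟩
      invFun := fun g => ⟨Finsupp.equivFunOnFinite.symm (fun i => (g i : ℕ)),
        fun i => Nat.le_of_lt_succ (g i).2⟩
      left_inv := fun n => by ext i; rfl
      right_inv := fun g => by ext i; rfl }
  have b := (basisRestrictSupport R {n : σ →₀ ℕ | ∀ i, n i ≤ m}).reindex e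
  rw [restrictDegree, Module.finrank_eq_card_basis b]
  simp

theorem restrictDegree_add (R : Type*) [CommSemiring R] (m n : ℕ) :
    restrictDegree σ R (m + n) = restrictDegree σ R m * restrictDegree σ R n := by
  simp only [restrictDegree, ← restrictSupport_add]
  congr 1
  ext x
  refine ⟨fun h => ?_, ?_⟩
  · refine ⟨x.mapRange (min m) (by simp), fun i => by simp,
      x.mapRange (· - m) (by simp), fun i => ?_, ?_⟩
    · simpa [add_comm n m] using h i
    · ext i
      simp only [Finsupp.add_apply, Finsupp.mapRange_apply]
      omega
  · rintro ⟨y, hy, z, hz, rfl⟩ i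
    exact add_le_add (hy i) (hz i)

theorem restrictDegree_pow (R : Type*) [CommSemiring R] (m n : ℕ) :
    restrictDegree σ R m ^ n = restrictDegree σ R (n * m) := by
  induction n with
  | zero =>
    rw [pow_zero, zero_mul, restrictDegree, ← restrictSupport_zero]
    congr 1
    ext x
    simp [Finsupp.ext_iff]
  | succ n ih => rw [pow_succ, ih, add_one_mul, restrictDegree_add]

theorem exists_le_restrictDegree {R : Type*} [CommSemiring R]
    {V : Submodule R (MvPolynomial σ R)} (hV : V.FG) : ∃ m, V ≤ restrictDegree σ R m := by
  obtain ⟨t, rfl⟩ := hV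
  refine ⟨t.sup totalDegree, Submodule.span_le.2 fun p hp => ?_⟩
  refine restrictTotalDegree_le_restrictDegree σ R _ ((mem_restrictTotalDegree _ _ _).2 ?_)
  exact Finset.le_sup hp

theorem finrank_restrictDegree_pow [Fintype σ] (R : Type*) [CommRing R] [StrongRankCondition R]
    (m n : ℕ) : Module.finrank R ↥(restrictDegree σ R m ^ n) = (n * m + 1) ^ Fintype.card σ := by
  rw [restrictDegree_pow, finrank_restrictDegree]

theorem powerGrowth_restrictDegree_le (k σ : Type) [Field k] [Fintype σ] (m : ℕ) :
    powerGrowth (restrictDegree σ k m) ≤ Fintype.card σ := by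
  simp only [powerGrowth, finrank_restrictDegree_pow]
  rw [← growthExponent_natCast_pow]
  refine growthExponent_le_of_isBigO (.of_bound ((m + 1) ^ Fintype.card σ) ?_)
  filter_upwards [Filter.eventually_ge_atTop 1] with n hn
  have : n * m + 1 ≤ (m + 1) * n := by linarith
  simpa [← mul_pow] using mod_cast Nat.pow_le_pow_left this _

theorem le_powerGrowth_restrictDegree_one (k σ : Type) [Field k] [Fintype σ] :
    Fintype.card σ ≤ powerGrowth (restrictDegree σ k 1) := by
  simp only [powerGrowth, finrank_restrictDegree_pow, mul_one]
  rw [← growthExponent_natCast_pow]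
  refine growthExponent_le_of_isBigO (.of_bound 1 (.of_forall fun n => ?_))
  simpa using mod_cast Nat.pow_le_pow_left (Nat.le_succ n) _

theorem GKdim_mvPolynomial (k σ : Type) [Field k] [Fintype σ] :
    GKdim k (MvPolynomial σ k) = Fintype.card σ := by
  apply le_antisymm
  · refine GKdim_le fun V hV => ?_
    obtain ⟨m, hm⟩ := exists_le_restrictDegree (Module.Finite.iff_fg.1 hV)
    exact (powerGrowth_mono hm).trans (powerGrowth_restrictDegree_le k σ m)
  · exact (le_powerGrowth_restrictDegree_one k σ).trans (powerGrowth_le_GKdim _)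

end MvPolynomial

section KrullDimension

theorem exists_ltSeries_comap_last_eq {B A : Type*} [CommRing B] [CommRing A] [Algebra B A]
    [Algebra.IsIntegral B A] [FaithfulSMul B A] (l : LTSeries (PrimeSpectrum B)) :
    ∃ L : LTSeries (PrimeSpectrum A), L.length = l.length ∧
      PrimeSpectrum.comap (algebraMap B A) L.last = l.last := by
  induction l using RelSeries.inductionOn' with
  | singleton x =>
    obtain ⟨y, hy⟩ := Algebra.IsIntegral.comap_surjective B A x
    exact ⟨RelSeries.singleton _ y, rfl, hy⟩
  | snoc p x hx ih =>
    obtain ⟨L, hlength, hlast⟩ := ih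
    have hle : L.last.asIdeal.comap (algebraMap B A) ≤ x.asIdeal := by
      rw [← PrimeSpectrum.comap_asIdeal, hlast]
      exact le_of_lt hx
    obtain ⟨Q, hQ, hQprime, hQcomap⟩ :=
      Ideal.exists_ideal_over_prime_of_isIntegral_of_isPrime x.asIdeal L.last.asIdeal hle
    have hcomap : PrimeSpectrum.comap (algebraMap B A) ⟨Q, hQprime⟩ = x := PrimeSpectrum.ext hQcomap
    have hlt : L.last < ⟨Q, hQprime⟩ := by
      refine lt_of_le_of_ne hQ fun h => ?_
      rw [← hcomap, ← h, hlast] at hx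
      exact absurd hx (lt_irrefl p.last)
    exact ⟨L.snoc _ hlt, by simp [hlength], by simpa using hcomap⟩

theorem ringKrullDim_eq_of_isIntegral (B A : Type*) [CommRing B] [CommRing A] [Algebra B A]
    [Algebra.IsIntegral B A] [FaithfulSMul B A] : ringKrullDim A = ringKrullDim B := by
  apply le_antisymm
  · exact Order.krullDim_le_of_strictMono (PrimeSpectrum.comap (algebraMap B A))
      fun p q hpq => Ideal.IsIntegral.comap_lt_comap (R := B) (I := p.asIdeal) (J := q.asIdeal) hpq
  · refine iSup_le fun l => ?_
    obtain ⟨L, hlength, -⟩ := exists_ltSeries_comap_last_eq (A := A) l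
    exact hlength ▸ Order.LTSeries.length_le_krullDim L

theorem GKdim_eq_ringKrullDim (k A : Type) [Field k] [CommRing A] [Algebra k A]
    [Algebra.FiniteType k A] {d : ℕ} (hd : ringKrullDim A = d) : GKdim k A = d := by
  have : Nontrivial A := by
    by_contra h
    have := not_nontrivial_iff_subsingleton.1 h
    simp [ringKrullDim_eq_bot_of_subsingleton] at hd
  obtain ⟨s, g, hg, hfin⟩ := exists_finite_inj_algHom_of_fg k A
  algebraize [g.toRingHom]
  have : Module.Finite (MvPolynomial (Fin s) k) A := hfin
  have : FaithfulSMul (MvPolynomial (Fin s) k) A := (faithfulSMul_iff_algebraMap_injective _ _).2 hg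
  have : IsScalarTower k (MvPolynomial (Fin s) k) A := .of_algebraMap_eq' g.comp_algebraMap.symm
  have hs : (s : WithBot ℕ∞) = d := by
    rw [← hd, ringKrullDim_eq_of_isIntegral (MvPolynomial (Fin s) k),
      MvPolynomial.ringKrullDim_of_isNoetherianRing, ringKrullDim_eq_zero_of_field]
    simp
  calc GKdim k A = GKdim k (MvPolynomial (Fin s) k) :=
        le_antisymm GKdim_le_of_finite (GKdim_le_of_injective g hg)
    _ = d := by
        rw [GKdim_mvPolynomial, Fintype.card_fin]
        exact_mod_cast hs

end KrullDimension

section Density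

variable {k R ι : Type*} [Field k] [IsAlgClosed k] [Ring R] [Algebra k R]
  {V : ι → Type*} [∀ i, AddCommGroup (V i)] [∀ i, Module k (V i)] [∀ i, Module R (V i)]
  [∀ i, IsScalarTower k R (V i)] [∀ i, IsSimpleModule R (V i)] [∀ i, FiniteDimensional k (V i)]

theorem exists_end_pi_eq_smul [Finite ι] (hV : Pairwise fun i j => IsEmpty (V i ≃ₗ[R] V j))
    (g : Module.End R (∀ i, V i)) : ∃ c : ι → k, ∀ x i, g x i = c i • x i := by
  classical
  have := Fintype.ofFinite ι
  let block : ∀ i j, V i →ₗ[R] V j := fun i j =>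
    LinearMap.proj j ∘ₗ g ∘ₗ LinearMap.single R V i
  have hoff : ∀ i j, i ≠ j → block i j = 0 := fun i j hij =>
    (block i j).bijective_or_eq_zero.resolve_left fun hbij =>
      (hV hij).false (LinearEquiv.ofBijective _ hbij)
  have hdiag : ∀ i, ∃ c : k, ∀ x, block i i x = c • x := fun i => by
    obtain ⟨c, hc⟩ :=
      (IsSimpleModule.algebraMap_end_bijective_of_isAlgClosed (A := R) k).surjective (block i i)
    exact ⟨c, fun x => by rw [← hc, Module.algebraMap_end_apply]⟩
  choose c hc using hdiag
  refine ⟨c, fun x j => ?_⟩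
  calc g x j = ∑ i, block i j (x i) := by
        conv_lhs => rw [← Finset.univ_sum_single x, map_sum, Finset.sum_apply]
        rfl
    _ = block j j (x j) := Finset.sum_eq_single j (fun i _ hij => by simp [hoff i j hij]) (by simp)
    _ = c j • x j := hc j _

theorem exists_smul_eq_of_isSimpleModule [Finite ι]
    (hV : Pairwise fun i j => IsEmpty (V i ≃ₗ[R] V j)) (T : ∀ i, Module.End k (V i)) :
    ∃ r : R, ∀ i x, r • x = T i x := by
  classical
  have := Fintype.ofFinite ι
  let F : Module.End (Module.End R (∀ i, V i)) (∀ i, V i) :=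
    { toFun := fun x i => T i (x i)
      map_add' := fun x y => by ext i; simp
      map_smul' := fun g x => by
        obtain ⟨c, hc⟩ := exists_end_pi_eq_smul (k := k) hV g
        ext i
        simp [hc] }
  obtain ⟨t, ht⟩ := Module.Finite.fg_top (R := k) (M := ∀ i, V i)
  obtain ⟨r, hr⟩ := jacobson_density F t
  have heq : LinearMap.pi (fun i => T i ∘ₗ LinearMap.proj i) =
      Algebra.lsmul k k (∀ i, V i) r := LinearMap.ext_on ht fun x hx => hr x hx
  refine ⟨r, fun i x => ?_⟩
  simpa using (congrFun (LinearMap.congr_fun heq (Pi.single i x)) i).symm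

end Density

section SliceMaps

variable {k X Y C : Type*} [Field k] [AddCommGroup X] [Module k X] [AddCommGroup Y] [Module k Y]
  [AddCommGroup C] [Module k C]

/-- Contraction of the right tensor factor with a functional, `x ⊗ c ↦ ψ c • x`. -/
noncomputable def sliceRight : Module.Dual k C →ₗ[k] X ⊗[k] C →ₗ[k] X :=
  LinearMap.compRight k (TensorProduct.rid k X).toLinearMap ∘ₗ LinearMap.lTensorHom X

/-- Contraction of the left tensor factor with a functional, `x ⊗ c ↦ φ x • c`. -/
noncomputable def sliceLeft : Module.Dual k X →ₗ[k] X ⊗[k] C →ₗ[k] C :=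
  LinearMap.compRight k (TensorProduct.lid k C).toLinearMap ∘ₗ LinearMap.rTensorHom C

@[simp]
theorem sliceRight_tmul (ψ : Module.Dual k C) (x : X) (c : C) :
    sliceRight ψ (x ⊗ₜ[k] c) = ψ c • x := by
  simp [sliceRight]

@[simp]
theorem sliceLeft_tmul (φ : Module.Dual k X) (x : X) (c : C) :
    sliceLeft φ (x ⊗ₜ[k] c) = φ x • c := by
  simp [sliceLeft]

theorem apply_sliceRight (φ : Module.Dual k X) (ψ : Module.Dual k C) (t : X ⊗[k] C) :
    φ (sliceRight ψ t) = ψ (sliceLeft φ t) := by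
  induction t with
  | zero => simp
  | tmul x c => simp [mul_comm]
  | add a b ha hb => simp [ha, hb]

theorem sliceRight_rTensor (f : X →ₗ[k] Y) (ψ : Module.Dual k C) (t : X ⊗[k] C) :
    sliceRight ψ (f.rTensor C t) = f (sliceRight ψ t) := by
  induction t with
  | zero => simp
  | tmul x c => simp
  | add a b ha hb => simp [ha, hb]

theorem equivFinsuppOfBasisRight_apply_eq_sliceRight {κ : Type*} [DecidableEq κ]
    (b : Module.Basis κ k C) (t : X ⊗[k] C) (i : κ) :
    TensorProduct.equivFinsuppOfBasisRight b t i = sliceRight (b.coord i) t := by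
  induction t with
  | zero => simp
  | tmul x c => simp
  | add a b ha hb => simp [ha, hb]

theorem sliceRight_ext {t u : X ⊗[k] C}
    (h : ∀ ψ : Module.Dual k C, sliceRight ψ t = sliceRight ψ u) : t = u := by
  classical
  let b := Module.Basis.ofVectorSpace k C
  apply (TensorProduct.equivFinsuppOfBasisRight (M := X) b).injective
  ext i
  simp only [equivFinsuppOfBasisRight_apply_eq_sliceRight, h]

instance finiteDimensional_range_sliceRight_flip (t : X ⊗[k] C) :
    FiniteDimensional k (LinearMap.range (sliceRight.flip t)) := by
  induction t with
  | zero => rw [map_zero, LinearMap.range_zero]; infer_instance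
  | tmul x c =>
    refine Submodule.finiteDimensional_of_le (S₂ := Submodule.span k {x}) ?_
    rintro _ ⟨ψ, rfl⟩
    simpa using Submodule.smul_mem _ _ (Submodule.mem_span_singleton_self x)
  | add a b ha hb =>
    rw [map_add]
    exact Submodule.finiteDimensional_of_le (LinearMap.range_add_le _ _)

open WithConv in
theorem sliceRight_sliceRight_comul [Coalgebra k C] (ψ ψ' : Module.Dual k C)
    (t : X ⊗[k] C) :
    sliceRight ψ (sliceRight ψ' ((TensorProduct.assoc k X C C).symm
      ((Coalgebra.comul (R := k) (A := C)).lTensor X t))) =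
    sliceRight (toConv ψ * toConv ψ').ofConv t := by
  have hpure : ∀ (x : X) (u : C ⊗[k] C),
      sliceRight ψ (sliceRight ψ' ((TensorProduct.assoc k X C C).symm (x ⊗ₜ u))) =
      LinearMap.mul' k k (TensorProduct.map ψ ψ' u) • x := fun x u => by
    induction u with
    | zero => simp
    | tmul a b => simp [smul_smul, mul_comm]
    | add a b ha hb => simp only [TensorProduct.tmul_add, map_add, ha, hb, add_smul]
  induction t with
  | zero => simp
  | tmul x c => simp [hpure, LinearMap.convMul_def]
  | add a b ha hb => simp only [map_add, ha, hb]

theorem sliceLeft_counit_comul [Coalgebra k C] (c : C) :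
    sliceLeft Coalgebra.counit (Coalgebra.comul (R := k) c) = c := by
  have h := congrArg (TensorProduct.lid k C) (Coalgebra.rTensor_counit_comul (R := k) c)
  rwa [TensorProduct.lid_tmul, one_smul] at h

end SliceMaps

section MulTensor

variable {k X Y A : Type*} [Field k] [AddCommGroup X] [Module k X] [AddCommGroup Y] [Module k Y]
  [Ring A] [Algebra k A]

theorem span_dualDistrib_tmul_eq_top [FiniteDimensional k X] [FiniteDimensional k Y] :
    Submodule.span k {Φ : Module.Dual k (X ⊗[k] Y) |
      ∃ φ χ, TensorProduct.dualDistrib k X Y (φ ⊗ₜ χ) = Φ} = ⊤ := by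
  have hsurj := (TensorProduct.dualDistribEquiv k X Y).range
  rw [LinearMap.range_eq_map, ← TensorProduct.span_tmul_eq_top, Submodule.map_span] at hsurj
  rw [← hsurj]
  congr 1
  ext Φ
  constructor
  · rintro ⟨φ, χ, rfl⟩
    exact ⟨_, ⟨φ, χ, rfl⟩, rfl⟩
  · rintro ⟨_, ⟨φ, χ, rfl⟩, rfl⟩
    exact ⟨φ, χ, rfl⟩

/-- The multiplication `(X ⊗ A) ⊗ (Y ⊗ A) → (X ⊗ Y) ⊗ A` through which the coaction on a tensor
product of comodules is defined. -/
noncomputable def mulTensor : (X ⊗[k] A) ⊗[k] (Y ⊗[k] A) →ₗ[k] (X ⊗[k] Y) ⊗[k] A :=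
  (LinearMap.mul' k A).lTensor (X ⊗[k] Y) ∘ₗ
    (TensorProduct.tensorTensorTensorComm k X A Y A).toLinearMap

@[simp]
theorem mulTensor_tmul (x : X) (y : Y) (a b : A) :
    mulTensor ((x ⊗ₜ[k] a) ⊗ₜ[k] (y ⊗ₜ[k] b)) = (x ⊗ₜ[k] y) ⊗ₜ[k] (a * b) := by
  simp [mulTensor]

theorem sliceLeft_mulTensor (φ : Module.Dual k X) (χ : Module.Dual k Y) (t : X ⊗[k] A)
    (u : Y ⊗[k] A) :
    sliceLeft (TensorProduct.dualDistrib k X Y (φ ⊗ₜ χ)) (mulTensor (t ⊗ₜ[k] u)) =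
      sliceLeft φ t * sliceLeft χ u := by
  induction t with
  | zero => simp
  | add a b ha hb => simp only [TensorProduct.add_tmul, map_add, ha, hb, add_mul]
  | tmul x a =>
    induction u with
    | zero => simp
    | add a b ha hb => simp only [TensorProduct.tmul_add, map_add, ha, hb, mul_add]
    | tmul y b => simp [smul_smul, mul_comm]

theorem sliceRight_mulTensor (ε : A →ₐ[k] k) (t : X ⊗[k] A) (u : Y ⊗[k] A) :
    sliceRight ε.toLinearMap (mulTensor (t ⊗ₜ[k] u)) =
      sliceRight ε.toLinearMap t ⊗ₜ sliceRight ε.toLinearMap u := by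
  induction t with
  | zero => simp
  | add a b ha hb => simp only [TensorProduct.add_tmul, map_add, ha, hb]
  | tmul x a =>
    induction u with
    | zero => simp
    | add a b ha hb => simp only [TensorProduct.tmul_add, map_add, ha, hb]
    | tmul y b => simp [TensorProduct.smul_tmul', TensorProduct.tmul_smul, smul_smul, mul_comm]

theorem rTensor_mulTensor (f : X →ₗ[k] X ⊗[k] A) (g : Y →ₗ[k] Y ⊗[k] A) :
    (mulTensor ∘ₗ TensorProduct.map f g).rTensor A ∘ₗ mulTensor =
      mulTensor.rTensor A ∘ₗ mulTensor ∘ₗ TensorProduct.map (f.rTensor A) (g.rTensor A) := by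
  ext x a y b
  simp

theorem assoc_symm_mulTensor (x : X) (y : Y) (c d : A ⊗[k] A) :
    (TensorProduct.assoc k (X ⊗[k] Y) A A).symm ((x ⊗ₜ[k] y) ⊗ₜ[k] (c * d)) =
      mulTensor.rTensor A (mulTensor ((TensorProduct.assoc k X A A).symm (x ⊗ₜ[k] c) ⊗ₜ[k]
        (TensorProduct.assoc k Y A A).symm (y ⊗ₜ[k] d))) := by
  induction c with
  | zero => simp
  | add a b ha hb => simp only [add_mul, TensorProduct.tmul_add, TensorProduct.add_tmul, map_add,
      ha, hb]
  | tmul a b =>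
    induction d with
    | zero => simp
    | add a b ha hb => simp only [mul_add, TensorProduct.tmul_add, map_add, ha, hb]
    | tmul a' b' => simp

end MulTensor

section MulTensorBialgebra

variable {k X Y A : Type*} [Field k] [AddCommGroup X] [Module k X] [AddCommGroup Y] [Module k Y]
  [Ring A] [Bialgebra k A]

theorem lTensor_comul_mulTensor :
    (TensorProduct.assoc k (X ⊗[k] Y) A A).symm.toLinearMap ∘ₗ
        (Coalgebra.comul (R := k) (A := A)).lTensor (X ⊗[k] Y) ∘ₗ mulTensor =
      mulTensor.rTensor A ∘ₗ mulTensor ∘ₗ TensorProduct.map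
        ((TensorProduct.assoc k X A A).symm.toLinearMap ∘ₗ (Coalgebra.comul (R := k)).lTensor X)
        ((TensorProduct.assoc k Y A A).symm.toLinearMap ∘ₗ
          (Coalgebra.comul (R := k)).lTensor Y) := by
  ext x a y b
  simp [assoc_symm_mulTensor]

theorem mulTensor_coassoc {ρ : X →ₗ[k] X ⊗[k] A} {σ : Y →ₗ[k] Y ⊗[k] A}
    (hρ : ρ.rTensor A ∘ₗ ρ = (TensorProduct.assoc k X A A).symm.toLinearMap ∘ₗ
      (Coalgebra.comul (R := k)).lTensor X ∘ₗ ρ)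
    (hσ : σ.rTensor A ∘ₗ σ = (TensorProduct.assoc k Y A A).symm.toLinearMap ∘ₗ
      (Coalgebra.comul (R := k)).lTensor Y ∘ₗ σ) :
    (mulTensor ∘ₗ TensorProduct.map ρ σ).rTensor A ∘ₗ mulTensor ∘ₗ TensorProduct.map ρ σ =
      (TensorProduct.assoc k (X ⊗[k] Y) A A).symm.toLinearMap ∘ₗ
        (Coalgebra.comul (R := k)).lTensor (X ⊗[k] Y) ∘ₗ mulTensor ∘ₗ TensorProduct.map ρ σ := by
  rw [← LinearMap.comp_assoc, rTensor_mulTensor, LinearMap.comp_assoc, LinearMap.comp_assoc,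
    ← TensorProduct.map_comp, hρ, hσ, ← LinearMap.comp_assoc ρ, ← LinearMap.comp_assoc σ,
    TensorProduct.map_comp]
  exact congrArg (· ∘ₗ TensorProduct.map ρ σ) lTensor_comul_mulTensor.symm

end MulTensorBialgebra

namespace Comod

variable {k : Type} [Field k] {H : Type} [Ring H] [HopfAlgebra k H] {M N : Comod k H}

section DualAction

/-- The action `ψ · x = (id ⊗ ψ) (ρ x)` of functionals on `M`. The comodule axioms for `M` say that
it is an action of the convolution algebra dual to `H`. -/
noncomputable def act (M : Comod k H) : Module.Dual k H →ₗ[k] Module.End k M.X :=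
  LinearMap.lcomp k M.X M.ρ ∘ₗ sliceRight

theorem act_apply (ψ : Module.Dual k H) (x : M.X) : M.act ψ x = sliceRight ψ (M.ρ x) := rfl

theorem isHom_iff_act {f : M.X →ₗ[k] N.X} :
    IsHom M N f ↔ ∀ ψ x, f (M.act ψ x) = N.act ψ (f x) := by
  refine ⟨fun hf ψ x => ?_, fun hf => LinearMap.ext fun x => sliceRight_ext fun ψ => ?_⟩
  · rw [act_apply, act_apply, ← sliceRight_rTensor]
    exact congrArg (sliceRight ψ) (LinearMap.congr_fun hf x).symm
  · rw [LinearMap.comp_apply, LinearMap.comp_apply, sliceRight_rTensor]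
    exact (hf ψ x).symm

theorem isSubcomodule_of_act_mem {V : Submodule k M.X}
    (hV : ∀ ψ, ∀ x ∈ V, M.act ψ x ∈ V) : M.IsSubcomodule V := fun x hx => by
  have hexact := rTensor_exact H (LinearMap.exact_subtype_mkQ V) (Submodule.mkQ_surjective V)
  refine (hexact (M.ρ x)).1 (sliceRight_ext fun ψ => ?_)
  rw [sliceRight_rTensor, map_zero]
  exact (Submodule.Quotient.mk_eq_zero V).2 (hV ψ x hx)

open WithConv in
theorem isComodule_iff_act : M.IsComodule ↔
    (∀ ψ ψ' : Module.Dual k H,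
      M.act (toConv ψ * toConv ψ').ofConv = M.act ψ * M.act ψ') ∧
    M.act (Coalgebra.counit (R := k) (A := H)) = 1 := by
  refine and_congr ?_ Iff.rfl
  have hslice : ∀ (ψ ψ' : Module.Dual k H) (x : M.X),
      sliceRight ψ (sliceRight ψ' (M.ρ.rTensor H (M.ρ x))) = (M.act ψ * M.act ψ') x :=
    fun ψ ψ' x => congrArg (sliceRight ψ) (sliceRight_rTensor M.ρ ψ' (M.ρ x))
  constructor
  · refine fun h ψ ψ' => LinearMap.ext fun x => ?_
    rw [← hslice, act_apply, ← sliceRight_sliceRight_comul]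
    exact congrArg (sliceRight ψ <| sliceRight ψ' ·) (LinearMap.congr_fun h x).symm
  · refine fun h => LinearMap.ext fun x => sliceRight_ext fun ψ' => sliceRight_ext fun ψ => ?_
    exact (hslice ψ ψ' x).trans <| (LinearMap.congr_fun (h ψ ψ') x).symm.trans
      (sliceRight_sliceRight_comul ψ ψ' (M.ρ x)).symm

theorem IsComodule.of_injective {f : M.X →ₗ[k] N.X} (hf : IsHom M N f)
    (hinj : Function.Injective f) (hN : N.IsComodule) : M.IsComodule := by
  rw [isHom_iff_act] at hf
  rw [isComodule_iff_act] at hN ⊢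
  refine ⟨fun ψ ψ' => LinearMap.ext fun x => hinj ?_, LinearMap.ext fun x => hinj ?_⟩
  · simp only [hf, hN.1, Module.End.mul_apply]
  · simp only [hf, hN.2, Module.End.one_apply]

theorem act_dsum (ψ : Module.Dual k H) :
    (M.dsum N).act ψ = LinearMap.prodMap (M.act ψ) (N.act ψ) :=
  LinearMap.ext fun (x : M.X × N.X) =>
    (map_add (sliceRight ψ) _ _).trans <|
      (congrArg₂ (· + ·) (sliceRight_rTensor (LinearMap.inl k M.X N.X) ψ (M.ρ x.1))
        (sliceRight_rTensor (LinearMap.inr k M.X N.X) ψ (N.ρ x.2))).trans <|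
      Prod.ext (add_zero _) (zero_add _)

theorem act_unit (ψ : Module.Dual k H) : (unit k H).act ψ = ψ 1 • 1 :=
  LinearMap.ext fun (x : k) => sliceRight_tmul ψ x 1

end DualAction

section Constructions

theorem IsComodule.dsum (hM : M.IsComodule) (hN : N.IsComodule) : (M.dsum N).IsComodule := by
  rw [isComodule_iff_act] at hM hN ⊢
  refine ⟨fun ψ ψ' => ?_, ?_⟩
  · simp only [act_dsum, hM.1, hN.1]; rfl
  · rw [act_dsum, hM.2, hN.2]; rfl

theorem isComodule_unit : (unit k H).IsComodule := by
  refine isComodule_iff_act.2 ⟨fun ψ ψ' => ?_, ?_⟩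
  · simp [act_unit, LinearMap.convMul_def, Algebra.TensorProduct.one_def, smul_smul, mul_comm]
  · rw [act_unit, Bialgebra.counit_one, one_smul]

theorem isComodule_regular : (regular k H).IsComodule :=
  ⟨LinearMap.ext fun (x : H) =>
      ((TensorProduct.assoc k H H H).eq_symm_apply.2 (Coalgebra.coassoc_apply x)),
    LinearMap.ext fun (x : H) =>
      (congrArg (TensorProduct.rid k H) (Coalgebra.lTensor_counit_comul x)).trans
        ((TensorProduct.rid_tmul x 1).trans (one_smul k x))⟩

theorem IsComodule.tensor (hM : M.IsComodule) (hN : N.IsComodule) :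
    (M.tensor N).IsComodule := by
  refine ⟨mulTensor_coassoc hM.1 hN.1, TensorProduct.ext' fun m n => ?_⟩
  have hε : ∀ (t : M.X ⊗[k] H) (u : N.X ⊗[k] H), _ :=
    sliceRight_mulTensor (Bialgebra.counitAlgHom k H)
  exact (hε (M.ρ m) (N.ρ n)).trans <|
    congrArg₂ (· ⊗ₜ[k] ·) (LinearMap.congr_fun hM.2 m) (LinearMap.congr_fun hN.2 n)

/-- Restriction of a coaction to a subcomodule. -/
noncomputable def restrict (M : Comod k H) (V : Submodule k M.X) (hV : M.IsSubcomodule V) :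
    Comod k H where
  X := V
  ρ := (LinearEquiv.ofInjective (V.subtype.rTensor H)
      (Module.Flat.rTensor_preserves_injective_linearMap _ V.injective_subtype)).symm.toLinearMap ∘ₗ
    (M.ρ ∘ₗ V.subtype).codRestrict _ fun x => hV x x.2

theorem isHom_restrict_subtype {V : Submodule k M.X} (hV : M.IsSubcomodule V) :
    IsHom (M.restrict V hV) M V.subtype :=
  LinearMap.ext fun x => (congrArg Subtype.val (LinearEquiv.apply_symm_apply
    (LinearEquiv.ofInjective (V.subtype.rTensor H)
      (Module.Flat.rTensor_preserves_injective_linearMap _ V.injective_subtype))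
    ⟨M.ρ x.1, hV x.1 x.2⟩)).symm

theorem iso_dsum_restrict {V W : Submodule k M.X} (hV : M.IsSubcomodule V)
    (hW : M.IsSubcomodule W) (hc : IsCompl V W) :
    Iso ((M.restrict V hV).dsum (M.restrict W hW)) M := by
  refine ⟨V.prodEquivOfIsCompl W hc, isHom_iff_act.2 fun ψ (x : V × W) => ?_⟩
  have hVx := isHom_iff_act.1 (isHom_restrict_subtype hV) ψ x.1
  have hWx := isHom_iff_act.1 (isHom_restrict_subtype hW) ψ x.2
  rw [act_dsum]
  exact (congrArg₂ (· + ·) hVx hWx).trans (map_add (M.act ψ) _ _).symm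

theorem Iso.symm (h : Iso M N) : Iso N M := by
  obtain ⟨e, he⟩ := h
  rw [isHom_iff_act] at he
  refine ⟨e.symm, isHom_iff_act.2 fun ψ x => e.injective ?_⟩
  simp only [LinearEquiv.coe_coe] at he ⊢
  rw [he, e.apply_symm_apply, e.apply_symm_apply]

end Constructions

section CoefficientSpace

/-- The matrix coefficient `c_{φ, x} = (φ ⊗ id) (ρ x)`. -/
noncomputable def coeff (M : Comod k H) : Module.Dual k M.X →ₗ[k] M.X →ₗ[k] H :=
  LinearMap.lcomp k H M.ρ ∘ₗ sliceLeft

/-- The span in `H` of the matrix coefficients of `M`. -/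
noncomputable def coeffSpace (M : Comod k H) : Submodule k H :=
  Submodule.map₂ M.coeff ⊤ ⊤

theorem coeff_mem_coeffSpace (φ : Module.Dual k M.X) (x : M.X) : M.coeff φ x ∈ M.coeffSpace :=
  Submodule.apply_mem_map₂ _ trivial trivial

instance finiteDimensional_coeffSpace [FiniteDimensional k M.X] :
    FiniteDimensional k M.coeffSpace :=
  .of_fg (Submodule.FG.map₂ _ Module.Finite.fg_top Module.Finite.fg_top)

theorem mem_dualAnnihilator_coeffSpace_iff {ψ : Module.Dual k H} :
    ψ ∈ M.coeffSpace.dualAnnihilator ↔ M.act ψ = 0 := by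
  have hcoeff : ∀ φ x, φ (M.act ψ x) = ψ (M.coeff φ x) := fun φ x => apply_sliceRight φ ψ (M.ρ x)
  rw [Submodule.mem_dualAnnihilator]
  refine ⟨fun h => LinearMap.ext fun x => ?_, fun h => ?_⟩
  · exact (Module.forall_dual_apply_eq_zero_iff k _).1 fun φ =>
      (hcoeff φ x).trans (h _ (coeff_mem_coeffSpace φ x))
  · have hle : M.coeffSpace ≤ LinearMap.ker ψ :=
      Submodule.map₂_le.2 fun φ _ x _ => by simp [← hcoeff, h]
    exact fun c hc => hle hc

theorem coeffSpace_le_of_injective {f : M.X →ₗ[k] N.X} (hf : IsHom M N f)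
    (hinj : Function.Injective f) : M.coeffSpace ≤ N.coeffSpace := by
  rw [isHom_iff_act] at hf
  refine Subspace.dualAnnihilator_le_dualAnnihilator_iff.1 fun ψ hψ => ?_
  rw [mem_dualAnnihilator_coeffSpace_iff] at hψ ⊢
  exact LinearMap.ext fun x => hinj <| by simp [hf, hψ]

theorem Iso.coeffSpace_eq (h : Iso M N) : M.coeffSpace = N.coeffSpace := by
  obtain ⟨e, he⟩ := h
  obtain ⟨e', he'⟩ := Iso.symm ⟨e, he⟩
  exact le_antisymm (coeffSpace_le_of_injective he e.injective)
    (coeffSpace_le_of_injective he' e'.injective)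

theorem coeffSpace_unit : (unit k H).coeffSpace = 1 := by
  refine Subspace.dualAnnihilator_inj.1 (SetLike.ext fun ψ => ?_)
  have hact : ψ 1 • (1 : Module.End k k) = 0 ↔ ψ 1 = 0 :=
    smul_eq_zero.trans (or_iff_left one_ne_zero)
  rw [mem_dualAnnihilator_coeffSpace_iff, act_unit, Submodule.mem_dualAnnihilator]
  exact hact.trans (Submodule.one_le (P := LinearMap.ker ψ)).symm

theorem coeffSpace_dsum : (M.dsum N).coeffSpace = M.coeffSpace ⊔ N.coeffSpace := by
  refine Subspace.dualAnnihilator_inj.1 (SetLike.ext fun ψ => ?_)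
  rw [Submodule.dualAnnihilator_sup_eq, Submodule.mem_inf]
  simp only [mem_dualAnnihilator_coeffSpace_iff, act_dsum]
  constructor
  · intro h
    exact ⟨LinearMap.ext fun x => congrArg Prod.fst (LinearMap.congr_fun h (x, 0)),
      LinearMap.ext fun x => congrArg Prod.snd (LinearMap.congr_fun h (0, x))⟩
  · rintro ⟨hM, hN⟩
    rw [hM, hN]
    exact LinearMap.prodMap_zero

theorem coeffSpace_tensor [FiniteDimensional k M.X] [FiniteDimensional k N.X] :
    (M.tensor N).coeffSpace = M.coeffSpace * N.coeffSpace := by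
  have hcoeff : ∀ φ χ x y, (M.tensor N).coeff (TensorProduct.dualDistrib k M.X N.X (φ ⊗ₜ χ))
      (x ⊗ₜ[k] y) = M.coeff φ x * N.coeff χ y :=
    fun φ χ x y => sliceLeft_mulTensor φ χ (M.ρ x) (N.ρ y)
  apply le_antisymm
  · change Submodule.map₂ (M.tensor N).coeff (⊤ : Submodule k (Module.Dual k (M.X ⊗[k] N.X)))
      (⊤ : Submodule k (M.X ⊗[k] N.X)) ≤ _
    rw [← span_dualDistrib_tmul_eq_top, ← TensorProduct.span_tmul_eq_top]
    refine (Submodule.map₂_span_span k _ _ _).trans_le (Submodule.span_le.2 ?_)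
    rintro _ ⟨_, ⟨φ, χ, rfl⟩, _, ⟨x, y, rfl⟩, rfl⟩
    exact (congrArg (· ∈ M.coeffSpace * N.coeffSpace) (hcoeff φ χ x y)).mpr <|
      Submodule.mul_mem_mul (coeff_mem_coeffSpace φ x) (coeff_mem_coeffSpace χ y)
  · rw [coeffSpace, coeffSpace, Submodule.map₂_eq_span_image2, Submodule.map₂_eq_span_image2,
      Submodule.span_mul_span, Submodule.span_le]
    rintro _ ⟨_, ⟨φ, -, x, -, rfl⟩, _, ⟨χ, -, y, -, rfl⟩, rfl⟩
    exact (congrArg (· ∈ (M.tensor N).coeffSpace) (hcoeff φ χ x y)).mp (coeff_mem_coeffSpace _ _)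

end CoefficientSpace

section LocalFiniteness

theorem le_map₂_act (hM : M.IsComodule) (W : Submodule k M.X) :
    W ≤ Submodule.map₂ M.act ⊤ W := fun w hw => by
  have hw' : M.act Coalgebra.counit w = w := by rw [(isComodule_iff_act.1 hM).2]; rfl
  exact hw' ▸ Submodule.apply_mem_map₂ _ trivial hw

theorem isSubcomodule_map₂_act (hM : M.IsComodule) (W : Submodule k M.X) :
    M.IsSubcomodule (Submodule.map₂ M.act ⊤ W) := by
  refine isSubcomodule_of_act_mem fun ψ x hx => ?_
  have hle : Submodule.map₂ M.act ⊤ W ≤ (Submodule.map₂ M.act ⊤ W).comap (M.act ψ) := by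
    refine Submodule.map₂_le.2 fun ψ' _ w hw => ?_
    rw [Submodule.mem_comap, ← Module.End.mul_apply,
      ← (isComodule_iff_act.1 hM).1]
    exact Submodule.apply_mem_map₂ _ trivial hw
  exact hle hx

theorem finiteDimensional_map₂_act {W : Submodule k M.X} (hW : W.FG) :
    FiniteDimensional k (Submodule.map₂ M.act ⊤ W) := by
  obtain ⟨t, rfl⟩ := hW
  have hle : Submodule.map₂ M.act ⊤ (Submodule.span k (t : Set M.X)) ≤
      ⨆ v : t, LinearMap.range (sliceRight.flip (M.ρ v)) := by
    refine Submodule.map₂_le.2 fun ψ _ w hw => ?_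
    refine (Submodule.span_le (p := (⨆ v : t, LinearMap.range (sliceRight.flip (M.ρ v))).comap
      (M.act ψ))).2 (fun v hv => ?_) hw
    exact Submodule.mem_iSup_of_mem (⟨v, hv⟩ : t) ⟨ψ, rfl⟩
  exact Submodule.finiteDimensional_of_le hle

/-- A finite-dimensional comodule. -/
structure IsFinite (M : Comod k H) : Prop where
  isComodule : M.IsComodule
  finiteDimensional : FiniteDimensional k M.X

theorem IsFinite.dsum (hM : M.IsFinite) (hN : N.IsFinite) : (M.dsum N).IsFinite where
  isComodule := hM.isComodule.dsum hN.isComodule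
  finiteDimensional :=
    have := hM.finiteDimensional
    have := hN.finiteDimensional
    inferInstanceAs (FiniteDimensional k (M.X × N.X))

theorem IsFinite.tensor (hM : M.IsFinite) (hN : N.IsFinite) : (M.tensor N).IsFinite where
  isComodule := hM.isComodule.tensor hN.isComodule
  finiteDimensional :=
    have := hM.finiteDimensional
    have := hN.finiteDimensional
    inferInstanceAs (FiniteDimensional k (M.X ⊗[k] N.X))

theorem isFinite_unit : (unit k H).IsFinite where
  isComodule := isComodule_unit
  finiteDimensional := inferInstanceAs (FiniteDimensional k k)

theorem IsComodule.restrict (hM : M.IsComodule) {V : Submodule k M.X} (hV : M.IsSubcomodule V) :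
    (M.restrict V hV).IsComodule :=
  .of_injective (isHom_restrict_subtype hV) V.injective_subtype hM

theorem exists_isFinite_le_coeffSpace {V : Submodule k H} (hV : V.FG) :
    ∃ M : Comod k H, M.IsFinite ∧ V ≤ M.coeffSpace := by
  let W : Submodule k H := Submodule.map₂ (regular k H).act ⊤ V
  have hW : (regular k H).IsSubcomodule W := isSubcomodule_map₂_act isComodule_regular V
  refine ⟨(regular k H).restrict W hW,
    ⟨isComodule_regular.restrict hW, finiteDimensional_map₂_act (M := regular k H) hV⟩, ?_⟩
  refine Subspace.dualAnnihilator_le_dualAnnihilator_iff.1 fun ψ hψ => ?_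
  rw [mem_dualAnnihilator_coeffSpace_iff] at hψ
  refine (Submodule.mem_dualAnnihilator ψ).2 fun v hv => ?_
  have hv' : v ∈ W := le_map₂_act (M := regular k H) isComodule_regular V hv
  have hact : (regular k H).act ψ v = 0 := by
    have := isHom_iff_act.1 (isHom_restrict_subtype hW) ψ ⟨v, hv'⟩
    rw [hψ] at this
    exact this.symm
  calc ψ v = ψ (sliceLeft Coalgebra.counit (Coalgebra.comul (R := k) v)) := by
        rw [sliceLeft_counit_comul]
    _ = Coalgebra.counit (R := k) (A := H) ((regular k H).act ψ v) :=
        (apply_sliceRight _ _ _).symm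
    _ = 0 := (congrArg _ hact).trans (map_zero _)

end LocalFiniteness

section SimpleComodules

/-- A comodule, seen as a representation of the convolution algebra dual to `H`. -/
noncomputable def IsComodule.actHom (hM : M.IsComodule) :
    WithConv (H →ₗ[k] k) →ₐ[k] Module.End k M.X :=
  AlgHom.ofLinearMap (M.act ∘ₗ (WithConv.linearEquiv k (H →ₗ[k] k)).toLinearMap)
    (isComodule_iff_act.1 hM).2 fun ψ ψ' => (isComodule_iff_act.1 hM).1 ψ.ofConv ψ'.ofConv

/-- The module over the convolution algebra dual to `H` underlying a comodule. -/
@[reducible] noncomputable def IsComodule.dualModule (hM : M.IsComodule) :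
    Module (WithConv (H →ₗ[k] k)) M.X :=
  Module.compHom M.X hM.actHom.toRingHom

theorem IsComodule.isScalarTower (hM : M.IsComodule) :
    letI := hM.dualModule
    IsScalarTower k (WithConv (H →ₗ[k] k)) M.X :=
  letI := hM.dualModule
  ⟨fun c r x => LinearMap.congr_fun (map_smul hM.actHom c r) x⟩

theorem IsSimple.isSimpleModule (hM : M.IsSimple) :
    letI := hM.1.dualModule
    IsSimpleModule (WithConv (H →ₗ[k] k)) M.X := by
  let := hM.1.dualModule
  have := hM.1.isScalarTower
  have := hM.2.1
  rw [isSimpleModule_iff]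
  refine { exists_pair_ne := ⟨⊥, ⊤, bot_ne_top⟩, eq_bot_or_eq_top := fun V => ?_ }
  have hV : M.IsSubcomodule (V.restrictScalars k) :=
    isSubcomodule_of_act_mem fun ψ x hx => V.smul_mem (WithConv.toConv ψ) hx
  exact (hM.2.2.2 _ hV).imp (Submodule.restrictScalars_eq_bot_iff k _ _).1
    (Submodule.restrictScalars_eq_top_iff k _ _).1

variable {ι : Type} {S : ι → Comod k H}

theorem surjective_pi_act [IsAlgClosed k] [Finite ι] (hS : ∀ i, (S i).IsSimple)
    (hne : Pairwise fun i j => ¬ Iso (S i) (S j)) :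
    Function.Surjective (LinearMap.pi fun i => (S i).act) := by
  intro T
  let := fun i => (hS i).1.dualModule
  have := fun i => (hS i).2.2.1
  have := fun i => (hS i).isSimpleModule
  have := fun i => (hS i).1.isScalarTower
  have hne' : Pairwise fun i j =>
      IsEmpty ((S i).X ≃ₗ[WithConv (H →ₗ[k] k)] (S j).X) := fun i j hij =>
    ⟨fun e => hne hij ⟨e.restrictScalars k,
      isHom_iff_act.2 fun ψ x => e.map_smul (WithConv.toConv ψ) x⟩⟩
  obtain ⟨r, hr⟩ := exists_smul_eq_of_isSimpleModule hne' T
  exact ⟨r.ofConv, funext fun i => LinearMap.ext (hr i)⟩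

theorem finrank_iSup_coeffSpace [IsAlgClosed k] [Fintype ι] (hS : ∀ i, (S i).IsSimple)
    (hne : Pairwise fun i j => ¬ Iso (S i) (S j)) :
    Module.finrank k (⨆ i, (S i).coeffSpace : Submodule k H) =
      ∑ i, Module.finrank k (S i).X ^ 2 := by
  have := fun i => (hS i).2.2.1
  let C : Submodule k H := ⨆ i, (S i).coeffSpace
  have hker : LinearMap.ker (LinearMap.pi fun i => (S i).act) = C.dualAnnihilator := by
    ext ψ
    simp only [C, Submodule.dualAnnihilator_iSup_eq, Submodule.mem_iInf, LinearMap.mem_ker,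
      mem_dualAnnihilator_coeffSpace_iff, funext_iff, LinearMap.pi_apply, Pi.zero_apply]
  calc Module.finrank k C = Module.finrank k (Module.Dual k C) := Subspace.dual_finrank_eq.symm
    _ = Module.finrank k (Module.Dual k H ⧸ C.dualAnnihilator) :=
        (Subspace.quotAnnihilatorEquiv C).finrank_eq.symm
    _ = Module.finrank k (∀ i, Module.End k (S i).X) :=
        ((Submodule.quotEquivOfEq _ _ hker.symm).trans
          (LinearMap.quotKerEquivOfSurjective _ (surjective_pi_act hS hne))).finrank_eq
    _ = ∑ i, Module.finrank k (S i).X ^ 2 := by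
        simp only [Module.finrank_pi_fintype, Module.finrank_linearMap, sq]

end SimpleComodules

end Comod

section AddIrreducible

variable {R : Type*} [AddCommMonoid R]

theorem subsingleton_addUnits_of_addMonoidHom_nat (d : R →+ ℕ) (hd : ∀ a, d a = 0 → a = 0) :
    Subsingleton (AddUnits R) := by
  have hzero : ∀ u : AddUnits R, u = 0 := fun u => AddUnits.ext <| hd _ <| by
    have hsum : d u + d ↑(-u) = 0 := by rw [← map_add, AddUnits.add_neg, map_zero]
    exact Nat.eq_zero_of_add_eq_zero_right hsum
  exact ⟨fun u v => (hzero u).trans (hzero v).symm⟩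

theorem exists_addIrreducible_multiset_sum_eq (d : R →+ ℕ) (hd : ∀ a, d a = 0 → a = 0) (a : R) :
    ∃ s : Multiset R, (∀ b ∈ s, AddIrreducible b) ∧ s.sum = a := by
  have := subsingleton_addUnits_of_addMonoidHom_nat d hd
  induction hn : d a using Nat.strong_induction_on generalizing a with
  | _ n ih =>
    subst hn
    by_cases ha : a = 0
    · exact ⟨0, by simp [ha]⟩
    obtain hirr | ⟨b, c, hb, hc, rfl⟩ := addIrreducible_or_factor (isAddUnit_iff_eq_zero.not.2 ha)
    · exact ⟨{a}, by simpa using hirr⟩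
    have hb' : d b ≠ 0 := fun h => hb (isAddUnit_iff_eq_zero.2 (hd b h))
    have hc' : d c ≠ 0 := fun h => hc (isAddUnit_iff_eq_zero.2 (hd c h))
    rw [map_add] at ih
    obtain ⟨s, hs, rfl⟩ := ih (d b) (by omega) b rfl
    obtain ⟨t, ht, rfl⟩ := ih (d c) (by omega) c rfl
    exact ⟨s + t, fun x hx => (Multiset.mem_add.1 hx).elim (hs x) (ht x), Multiset.sum_add s t⟩

end AddIrreducible

namespace GrSemiring

variable {k : Type} [Field k] {H : Type} [Ring H] [HopfAlgebra k H]

section Representatives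

variable (G : GrSemiring k H)

/-- A chosen finite-dimensional comodule of class `a`. -/
noncomputable def rep (a : G.R) : Comod k H :=
  (G.cls_surj a).choose

theorem isFinite_rep (a : G.R) : (G.rep a).IsFinite :=
  ⟨(G.cls_surj a).choose_spec.1, (G.cls_surj a).choose_spec.2.1⟩

instance finiteDimensional_rep (a : G.R) : FiniteDimensional k (G.rep a).X :=
  (G.isFinite_rep a).finiteDimensional

theorem cls_rep (a : G.R) : G.cls (G.rep a) = a :=
  (G.cls_surj a).choose_spec.2.2

variable {G}

theorem iso_rep_iff {M : Comod k H} (hM : M.IsFinite) {a : G.R} :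
    (G.rep a).Iso M ↔ G.cls M = a := by
  have hrep := G.isFinite_rep a
  refine ⟨fun h => ?_, fun h => ?_⟩
  · rw [← G.cls_iso _ _ hrep.1 hM.1 hrep.2 hM.2 h, cls_rep]
  · exact G.cls_inj _ _ hrep.1 hM.1 hrep.2 hM.2 ((G.cls_rep a).trans h.symm)

theorem iso_rep_one : (G.rep 1).Iso (Comod.unit k H) :=
  (iso_rep_iff Comod.isFinite_unit).2 G.cls_one

theorem iso_rep_add (a b : G.R) : (G.rep (a + b)).Iso ((G.rep a).dsum (G.rep b)) := by
  have ha := G.isFinite_rep a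
  have hb := G.isFinite_rep b
  rw [iso_rep_iff (ha.dsum hb), G.cls_dsum _ _ ha.1 hb.1 ha.2 hb.2, cls_rep, cls_rep]

theorem iso_rep_mul (a b : G.R) : (G.rep (a * b)).Iso ((G.rep a).tensor (G.rep b)) := by
  have ha := G.isFinite_rep a
  have hb := G.isFinite_rep b
  rw [iso_rep_iff (ha.tensor hb), G.cls_tensor _ _ ha.1 hb.1 ha.2 hb.2, cls_rep, cls_rep]

end Representatives

section Dimension

variable (G : GrSemiring k H)

theorem finrank_rep_add (a b : G.R) :
    Module.finrank k (G.rep (a + b)).X =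
      Module.finrank k (G.rep a).X + Module.finrank k (G.rep b).X := by
  obtain ⟨e, -⟩ := iso_rep_add a b
  exact e.finrank_eq.trans Module.finrank_prod

/-- The dimension function `d_H` on the Grothendieck semiring. -/
noncomputable def dim : G.R →+ ℕ where
  toFun a := Module.finrank k (G.rep a).X
  map_zero' := by
    have h := G.finrank_rep_add 0 0
    rw [add_zero] at h
    omega
  map_add' := G.finrank_rep_add

variable {G}

theorem dim_cls {M : Comod k H} (hM : M.IsFinite) : G.dim (G.cls M) = Module.finrank k M.X := by
  obtain ⟨e, -⟩ := (iso_rep_iff (G := G) hM).2 rfl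
  exact e.finrank_eq

theorem subsingleton_of_dim_eq_zero {a : G.R} (ha : G.dim a = 0) : Subsingleton (G.rep a).X :=
  Module.finrank_zero_iff.1 ha

theorem eq_zero_of_dim_eq_zero {a : G.R} (ha : G.dim a = 0) : a = 0 := by
  have := subsingleton_of_dim_eq_zero ha
  have := subsingleton_of_dim_eq_zero (map_zero G.dim)
  have hiso : (G.rep 0).Iso (G.rep a) :=
    ⟨0, LinearMap.ext fun x => by rw [Subsingleton.elim x 0, map_zero, map_zero]⟩
  rw [← G.cls_rep a, (iso_rep_iff (G.isFinite_rep a)).1 hiso]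

theorem cls_eq_zero_iff {M : Comod k H} (hM : M.IsFinite) : G.cls M = 0 ↔ Subsingleton M.X := by
  have := hM.finiteDimensional
  rw [← Module.finrank_zero_iff (R := k), ← dim_cls (G := G) hM]
  exact ⟨fun h => by rw [h, map_zero], eq_zero_of_dim_eq_zero⟩

instance subsingleton_addUnits : Subsingleton (AddUnits G.R) :=
  subsingleton_addUnits_of_addMonoidHom_nat G.dim fun _ => eq_zero_of_dim_eq_zero

theorem isSimple_rep (hH : IsCosemisimple k H) {a : G.R} (ha : AddIrreducible a) :
    (G.rep a).IsSimple := by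
  have hrep := G.isFinite_rep a
  have hfin : ∀ V hV, ((G.rep a).restrict V hV).IsFinite := fun V hV =>
    ⟨hrep.1.restrict hV, inferInstanceAs (FiniteDimensional k V)⟩
  have hnontrivial : Nontrivial (G.rep a).X := by
    rw [← not_subsingleton_iff_nontrivial, ← cls_eq_zero_iff (G := G) hrep, cls_rep]
    exact ha.ne_zero
  refine ⟨hrep.1, hnontrivial, hrep.2, fun V hV => ?_⟩
  obtain ⟨W, hW, hVW⟩ := hH _ hrep.1 V hV
  have hsum : a = G.cls ((G.rep a).restrict V hV) + G.cls ((G.rep a).restrict W hW) := by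
    rw [← G.cls_dsum _ _ (hfin V hV).1 (hfin W hW).1 (hfin V hV).2 (hfin W hW).2]
    exact ((iso_rep_iff ((hfin V hV).dsum (hfin W hW))).1
      (Comod.iso_dsum_restrict hV hW hVW).symm).symm
  rw [hsum] at ha
  refine ha.eq_zero_or_eq_zero.imp (fun h => ?_) fun h => ?_
  · exact Submodule.subsingleton_iff_eq_bot.1 ((cls_eq_zero_iff (hfin V hV)).1 h)
  · have hWbot := Submodule.subsingleton_iff_eq_bot.1 ((cls_eq_zero_iff (hfin W hW)).1 h)
    exact eq_top_of_isCompl_bot (hWbot ▸ hVW)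

end Dimension

section CoefficientSpace

variable (G : GrSemiring k H)

/-- The coefficient space of a class: sums and products of classes become sums and products of
subspaces of `H`. -/
noncomputable def coeffHom : G.R →+* Submodule k H where
  toFun a := (G.rep a).coeffSpace
  map_one' := iso_rep_one.coeffSpace_eq.trans Comod.coeffSpace_unit
  map_mul' a b := (iso_rep_mul a b).coeffSpace_eq.trans Comod.coeffSpace_tensor
  map_add' a b := (iso_rep_add a b).coeffSpace_eq.trans Comod.coeffSpace_dsum
  map_zero' := by
    have := subsingleton_of_dim_eq_zero (map_zero G.dim)
    refine eq_bot_iff.2 (Submodule.map₂_le.2 fun φ _ x _ => ?_)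
    rw [Subsingleton.elim x 0, map_zero]
    exact zero_mem _

instance finiteDimensional_coeffHom (a : G.R) : FiniteDimensional k (G.coeffHom a) :=
  Comod.finiteDimensional_coeffSpace

variable {G}

theorem coeffHom_cls {M : Comod k H} (hM : M.IsFinite) : G.coeffHom (G.cls M) = M.coeffSpace :=
  ((iso_rep_iff hM).2 rfl).coeffSpace_eq

theorem coeffHom_multiset_sum [DecidableEq G.R] (s : Multiset G.R) :
    G.coeffHom s.sum = ⨆ a : s.toFinset, G.coeffHom a := by
  rw [map_multiset_sum, Finset.sum_multiset_map_count, iSup_subtype]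
  calc ∑ a ∈ s.toFinset, s.count a • G.coeffHom a = ∑ a ∈ s.toFinset, G.coeffHom a :=
        Finset.sum_congr rfl fun a ha =>
          nsmul_eq_self (Multiset.count_ne_zero.2 (Multiset.mem_toFinset.1 ha)) _
    _ = ⨆ a ∈ s.toFinset, G.coeffHom a := by
        rw [← Finset.sup_eq_iSup]
        rfl

theorem finrank_coeffHom_sum [IsAlgClosed k] [DecidableEq G.R] (hH : IsCosemisimple k H)
    {s : Multiset G.R} (hs : ∀ a ∈ s, AddIrreducible a) :
    Module.finrank k (G.coeffHom s.sum) = ∑ a ∈ s.toFinset, G.dim a ^ 2 := by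
  rw [coeffHom_multiset_sum, ← Finset.sum_coe_sort]
  refine Comod.finrank_iSup_coeffSpace (S := fun a : s.toFinset => G.rep a)
    (fun a => isSimple_rep hH (hs a (Multiset.mem_toFinset.1 a.2))) fun a b hab hiso => hab ?_
  refine Subtype.ext ?_
  rw [← G.cls_rep b]
  exact ((iso_rep_iff (G.isFinite_rep b)).1 hiso).symm

theorem GKdim_eq_iSup_powerGrowth (G : GrSemiring k H) :
    GKdim k H = ⨆ a, powerGrowth (G.coeffHom a) := by
  refine le_antisymm (GKdim_le fun V hV => ?_) (iSup_le fun a => powerGrowth_le_GKdim _)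
  obtain ⟨M, hM, hVM⟩ :=
    Comod.exists_isFinite_le_coeffSpace ((Submodule.fg_iff_finiteDimensional V).2 hV)
  rw [← coeffHom_cls (G := G) hM] at hVM
  exact (powerGrowth_mono hVM).trans (le_iSup (fun a => powerGrowth (G.coeffHom a)) _)

end CoefficientSpace

section Comparison

variable [IsAlgClosed k] {K : Type} [Ring K] [HopfAlgebra k K]
  {G : GrSemiring k H} {G' : GrSemiring k K}

theorem finrank_coeffHom_map (hH : IsCosemisimple k H) (hK : IsCosemisimple k K)
    (f : G.R ≃+* G'.R) (hf : ∀ a, AddIrreducible a → G'.dim (f a) = G.dim a) (a : G.R) :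
    Module.finrank k (G'.coeffHom (f a)) = Module.finrank k (G.coeffHom a) := by
  classical
  obtain ⟨s, hs, rfl⟩ :=
    exists_addIrreducible_multiset_sum_eq G.dim (fun _ => eq_zero_of_dim_eq_zero) a
  have hs' : ∀ b ∈ s.map f, AddIrreducible b := by
    simpa [AddEquiv.addIrreducible_iff] using hs
  rw [map_multiset_sum, finrank_coeffHom_sum hK hs', finrank_coeffHom_sum hH hs,
    Multiset.toFinset_map, Finset.sum_image f.injective.injOn]
  exact Finset.sum_congr rfl fun b hb => by rw [hf b (hs b (Multiset.mem_toFinset.1 hb))]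

theorem powerGrowth_coeffHom_map (hH : IsCosemisimple k H) (hK : IsCosemisimple k K)
    (f : G.R ≃+* G'.R) (hf : ∀ a, AddIrreducible a → G'.dim (f a) = G.dim a) (a : G.R) :
    powerGrowth (G'.coeffHom (f a)) = powerGrowth (G.coeffHom a) := by
  unfold powerGrowth
  congr! 3 with n
  rw [← map_pow, ← map_pow, ← map_pow, finrank_coeffHom_map hH hK f hf]

theorem GKdim_eq_of_ringEquiv (hH : IsCosemisimple k H) (hK : IsCosemisimple k K)
    (f : G.R ≃+* G'.R) (hf : ∀ a, AddIrreducible a → G'.dim (f a) = G.dim a) :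
    GKdim k H = GKdim k K := by
  rw [G.GKdim_eq_iSup_powerGrowth, G'.GKdim_eq_iSup_powerGrowth]
  exact f.toEquiv.iSup_congr (powerGrowth_coeffHom_map hH hK f hf)

end Comparison

end GrSemiring

theorem stmt3_general (k : Type) [Field k] [IsAlgClosed k]
    (A : Type) [CommRing A] [HopfAlgebra k A] (hfgA : Algebra.FiniteType k A)
    (hA : IsCosemisimple k A)
    (H : Type) [Ring H] [HopfAlgebra k H] (hH : IsCosemisimple k H)
    (GA : GrSemiring k A) (GH : GrSemiring k H)
    (f : GH.R ≃+* GA.R)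
    (hdim : ∀ M : Comod k H, M.IsSimple →
      ∀ M' : Comod k A, M'.IsComodule → FiniteDimensional k M'.X →
        GA.cls M' = f (GH.cls M) →
          Module.finrank k M'.X = Module.finrank k M.X)
    (d : ℕ) (hd : ringKrullDim A = d) :
    GKdim k H = d := by
  have hf : ∀ a, AddIrreducible a → GA.dim (f a) = GH.dim a := fun a ha =>
    hdim _ (GrSemiring.isSimple_rep hH ha) _ (GA.isFinite_rep (f a)).1
      (GA.isFinite_rep (f a)).2 (by rw [GA.cls_rep, GH.cls_rep])
  rw [GrSemiring.GKdim_eq_of_ringEquiv hH hA f hf, GKdim_eq_ringKrullDim k A hd]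

/-- Theorem 2.7, the main theorem of the paper.  Let `G` be a
linearly reductive affine algebraic group over an algebraically closed field
`k`, presented by its coordinate Hopf algebra `A = O(G)` (a commutative, reduced,
finitely generated Hopf algebra, cosemisimple since `G` is linearly reductive).
Let `H` be a finitely generated cosemisimple Hopf algebra which is a quantum
function algebra on `G`: `(R_+(H), d_H) ≅ (R_+(G), d_G)`.
Then `GKdim H = dim G`, the dimension of `G` as an algebraic variety
(i.e. the Krull dimension of `O(G)`). -/
theorem stmt3 (k : Type) [Field k] [IsAlgClosed k]
    (A : Type) [CommRing A] [HopfAlgebra k A]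
    (hred : IsReduced A) (hfgA : Algebra.FiniteType k A)
    (hA : IsCosemisimple k A)
    (H : Type) [Ring H] [HopfAlgebra k H]
    (hH : IsCosemisimple k H) (hfgH : Algebra.FiniteType k H)
    (GA : GrSemiring k A) (GH : GrSemiring k H)
    (f : GH.R ≃+* GA.R)
    (hdim : ∀ M : Comod k H, M.IsSimple →
      ∀ M' : Comod k A, M'.IsComodule → FiniteDimensional k M'.X →
        GA.cls M' = f (GH.cls M) →
          Module.finrank k M'.X = Module.finrank k M.X)
    (d : ℕ) (hd : ringKrullDim A = d) :
    GKdim k H = d :=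
  stmt3_general k A hfgA hA H hH GA GH f hdim d hd
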